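/- Main theorem (probabilistic ADAGIO form): there exists a universal constant C > 0 such that the following holds. Let T ⊆ ℝ^d be a finite set with |T| ≥ 2, let P ∈ ℝ^{s×d} be a matrix with orthonormal rows (P·Pᵀ = I_s) that has distortion at most δ on T for some 0 ≤ δ ≤ 1, let 0 < ε < 1, and let k be a natural number with k ≥ C · ε⁻² · log |T|. Let S ∈ ℝ^{k×d} be a random matrix whose entries are independent and uniformly distributed on {−1/√k, +1/√k}, and define the linear map Π : ℝ^d → ℝ^{s+k} by Π(w) = (P w, S(w − Pᵀ P w)). Then with probability at least 0.99 over the choice of S, for all distinct x, y ∈ T, (1 − δε)·‖x − y‖ ≤ ‖Π(x − y)‖ ≤ (1 + δε)·‖x − y‖. -/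

import Mathlib

/-!
For a difference `z = x - y`, Pythagoras gives `‖z‖² = ‖P z‖² + ‖w‖²` with `w = z - Pᵀ P z`, and
`‖Π z‖² = ‖P z‖² + ‖S w‖²`. Since `‖P z‖ ≥ (1 - δ) ‖z‖`, the residual satisfies `‖w‖² ≤ 2 δ ‖z‖²`.
Hence `|‖S w‖² - ‖w‖²| ≤ (ε / 2) ‖w‖²` implies `|‖Π z‖² - ‖z‖²| ≤ δ ε ‖z‖²`, which is enough
because `(1 - δ ε)² ≤ 1 - δ ε` and `1 + δ ε ≤ (1 + δ ε)²` (`adagio_of_good`).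

It remains to see that a random sign matrix preserves the squared length of each residual up to a
factor `1 ± ε / 2`, with failure probability `2 exp (-ε² k / 4096)` (`card_bad_le`), and to take a
union bound over the pairs in `T`. For a unit vector `v`, `k ‖S v‖² = ∑ X i ^ 2` with independent
signed sums `X i = ∑ j, ±v j`. The Gaussian identity `√π exp (X² / 4) = ∫ exp (-g² + X g) dg` and
Hoeffding's bound `E exp (X g) ≤ exp (g² / 2)` give `E exp (X² / 4) ≤ √2`
(`sum_exp_signSum_sq_le`). Together with `E X² = 1` and `exp y ≤ 1 + y + y² exp |y|` this yields
`E exp (θ X²) ≤ exp (θ + 256 θ²)` for `|θ| ≤ 1 / 8` (`sum_exp_mul_signSum_sq_le`), so the Chernoff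
method bounds both tails (`card_chernoff`).

Probabilities are handled throughout as cardinalities of sets of sign patterns.
-/

open scoped BigOperators
open Classical

/-- Euclidean (ℓ₂) norm of a vector in `ℝ^n` given as `Fin n → ℝ`. -/
noncomputable def euclNorm {n : ℕ} (v : Fin n → ℝ) : ℝ :=
  Real.sqrt (∑ i, v i ^ 2)

/-- A matrix `M ∈ ℝ^{r×d}` has distortion at most `δ` on a finite set `T ⊆ ℝ^d` if for
all distinct `x, y ∈ T`, `(1 − δ)·‖x − y‖ ≤ ‖M(x − y)‖ ≤ (1 + δ)·‖x − y‖`. -/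
def HasDistortionOn {r d : ℕ} (M : Matrix (Fin r) (Fin d) ℝ) (δ : ℝ)
    (T : Finset (Fin d → ℝ)) : Prop :=
  ∀ x ∈ T, ∀ y ∈ T, x ≠ y →
    (1 - δ) * euclNorm (x - y) ≤ euclNorm (M.mulVec (x - y)) ∧
      euclNorm (M.mulVec (x - y)) ≤ (1 + δ) * euclNorm (x - y)

/-- The `k × d` random sign matrix determined by the Boolean choices `σ`:
entry `(i,j)` equals `1/√k` if `σ i j` is true and `-1/√k` otherwise. -/
noncomputable def signMatrix {k d : ℕ} (σ : Fin k → Fin d → Bool) :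
    Matrix (Fin k) (Fin d) ℝ :=
  Matrix.of fun i j => if σ i j then (1 / Real.sqrt k) else -(1 / Real.sqrt k)

/-- The ADAGIO linear map `Π : ℝ^d → ℝ^{s+k}`, `Π(w) = (P w, S(w − Pᵀ P w))`,
with the Euclidean norm on `ℝ^{s+k}` realised by concatenating the coordinates. -/
noncomputable def adagioMap {s d k : ℕ} (P : Matrix (Fin s) (Fin d) ℝ)
    (S : Matrix (Fin k) (Fin d) ℝ) (w : Fin d → ℝ) : Fin (s + k) → ℝ :=
  Fin.append (P.mulVec w) (S.mulVec (w - P.transpose.mulVec (P.mulVec w)))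

/-! ### Moments of signed sums -/

/-- The signed sum `∑ j, ±v j`, with the signs read off from `τ`: `+` where `τ j` is true. -/
noncomputable def signSum {d : ℕ} (v : Fin d → ℝ) (τ : Fin d → Bool) : ℝ :=
  ∑ j, if τ j then v j else -v j

lemma sum_bool_pi_succ {d : ℕ} (f : (Fin (d + 1) → Bool) → ℝ) :
    ∑ τ, f τ = ∑ τ : Fin d → Bool, (f (Fin.cons true τ) + f (Fin.cons false τ)) := by
  rw [← (Fin.consEquiv (fun _ : Fin (d + 1) => Bool)).sum_comp, Fintype.sum_prod_type,
    Fintype.sum_bool, ← Finset.sum_add_distrib]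
  rfl

lemma signSum_cons {d : ℕ} (v : Fin (d + 1) → ℝ) (b : Bool) (τ : Fin d → Bool) :
    signSum v (Fin.cons b τ) = (if b then v 0 else -v 0) + signSum (Fin.tail v) τ := by
  simp [signSum, Fin.sum_univ_succ, Fin.tail]

lemma sum_signSum_sq {d : ℕ} (v : Fin d → ℝ) :
    ∑ τ, signSum v τ ^ 2 = 2 ^ d * ∑ j, v j ^ 2 := by
  induction d with
  | zero => simp [signSum]
  | succ d ih =>
    have h : ∀ τ : Fin d → Bool, signSum v (Fin.cons true τ) ^ 2 +
        signSum v (Fin.cons false τ) ^ 2 = 2 * v 0 ^ 2 + 2 * signSum (Fin.tail v) τ ^ 2 := by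
      intro τ
      simp only [signSum_cons]
      norm_num
      ring
    rw [sum_bool_pi_succ, Finset.sum_congr rfl fun τ _ => h τ, Finset.sum_add_distrib,
      ← Finset.mul_sum Finset.univ (fun τ => signSum (Fin.tail v) τ ^ 2), ih, Fin.sum_univ_succ]
    simp [Fin.tail]
    ring

/-- Hoeffding's bound for the moment generating function of a signed sum. -/
lemma sum_exp_signSum_le {d : ℕ} (v : Fin d → ℝ) (a : ℝ) :
    ∑ τ, Real.exp (signSum v τ * a) ≤ 2 ^ d * Real.exp (a ^ 2 * (∑ j, v j ^ 2) / 2) := by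
  induction d with
  | zero => simp [signSum]
  | succ d ih =>
    have h : ∀ τ : Fin d → Bool, Real.exp (signSum v (Fin.cons true τ) * a) +
        Real.exp (signSum v (Fin.cons false τ) * a)
          = 2 * Real.cosh (v 0 * a) * Real.exp (signSum (Fin.tail v) τ * a) := by
      intro τ
      simp only [signSum_cons, Real.cosh_eq, add_mul, Real.exp_add]
      norm_num
      ring
    rw [sum_bool_pi_succ, Finset.sum_congr rfl fun τ _ => h τ, ← Finset.mul_sum,
      Fin.sum_univ_succ]
    calc 2 * Real.cosh (v 0 * a) * ∑ τ, Real.exp (signSum (Fin.tail v) τ * a)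
        ≤ 2 * Real.exp ((v 0 * a) ^ 2 / 2) *
          (2 ^ d * Real.exp (a ^ 2 * (∑ j, Fin.tail v j ^ 2) / 2)) := by
          gcongr
          · exact Real.cosh_le_exp_half_sq _
          · exact ih _
      _ = 2 ^ (d + 1) * (Real.exp ((v 0 * a) ^ 2 / 2) *
          Real.exp (a ^ 2 * (∑ j, Fin.tail v j ^ 2) / 2)) := by ring
      _ = _ := by
          rw [← Real.exp_add]
          congr 2
          simp only [Fin.tail]
          ring

/-! ### Square-exponential moments through a Gaussian integral -/

lemma exp_neg_sq_add_mul (x g : ℝ) :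
    Real.exp (-g ^ 2 + x * g) = Real.exp (x ^ 2 / 4) * Real.exp (-1 * (g - x / 2) ^ 2) := by
  rw [← Real.exp_add]
  congr 1
  ring

lemma integrable_exp_neg_sq_add_mul (x : ℝ) :
    MeasureTheory.Integrable fun g : ℝ => Real.exp (-g ^ 2 + x * g) := by
  simp only [exp_neg_sq_add_mul]
  exact ((integrable_exp_neg_mul_sq one_pos).comp_sub_right (x / 2)).const_mul _

/-- Linearization of the square in `exp (x² / 4)` by a Gaussian integral. -/
lemma integral_exp_neg_sq_add_mul (x : ℝ) :
    ∫ g : ℝ, Real.exp (-g ^ 2 + x * g) = Real.sqrt Real.pi * Real.exp (x ^ 2 / 4) := by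
  simp only [exp_neg_sq_add_mul]
  rw [MeasureTheory.integral_const_mul,
    MeasureTheory.integral_sub_right_eq_self (fun g : ℝ => Real.exp (-1 * g ^ 2)),
    integral_gaussian, div_one, mul_comm]

/-- Writing `exp (X² / 4)` as a Gaussian integral of `exp (X g)` reduces the square-exponential
moment of a signed sum `X` to Hoeffding's bound. The argument gives the constant `√2`, relaxed to
`2` in the statement. -/
lemma sum_exp_signSum_sq_le {d : ℕ} (v : Fin d → ℝ) (hv : ∑ j, v j ^ 2 = 1) :
    ∑ τ, Real.exp (signSum v τ ^ 2 / 4) ≤ 2 ^ d * 2 := by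
  have hpi : 0 < Real.sqrt Real.pi := Real.sqrt_pos.2 Real.pi_pos
  have h1 : Real.sqrt Real.pi * ∑ τ, Real.exp (signSum v τ ^ 2 / 4) =
      ∫ g : ℝ, ∑ τ, Real.exp (-g ^ 2 + signSum v τ * g) := by
    rw [MeasureTheory.integral_finsetSum _ fun τ _ => integrable_exp_neg_sq_add_mul _,
      Finset.mul_sum]
    simp only [integral_exp_neg_sq_add_mul]
  have h2 : ∫ g : ℝ, ∑ τ, Real.exp (-g ^ 2 + signSum v τ * g) ≤
      ∫ g : ℝ, 2 ^ d * Real.exp (-(1 / 2) * g ^ 2) := by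
    refine MeasureTheory.integral_mono
      (MeasureTheory.integrable_finsetSum _ fun τ _ => integrable_exp_neg_sq_add_mul _)
      ((integrable_exp_neg_mul_sq (by norm_num)).const_mul _) fun g => ?_
    have := mul_le_mul_of_nonneg_left (sum_exp_signSum_le v g) (Real.exp_pos (-g ^ 2)).le
    simp only [Real.exp_add, ← Finset.mul_sum]
    refine this.trans_eq ?_
    rw [hv, mul_left_comm, ← Real.exp_add]
    congr 2
    ring
  rw [MeasureTheory.integral_const_mul, integral_gaussian,
    show Real.pi / (1 / 2) = Real.pi * 2 by ring, Real.sqrt_mul Real.pi_pos.le] at h2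
  have h3 : Real.sqrt 2 ≤ 2 := by
    rw [Real.sqrt_le_left (by norm_num)]
    norm_num
  refine le_of_mul_le_mul_left ?_ hpi
  rw [h1]
  refine h2.trans ?_
  have : (0 : ℝ) ≤ 2 ^ d * Real.sqrt Real.pi := by positivity
  nlinarith

lemma exp_le_one_add_add_sq_mul_exp_abs (y : ℝ) :
    Real.exp y ≤ 1 + y + y ^ 2 * Real.exp |y| := by
  have h := Complex.norm_exp_sub_sum_le_norm_mul_exp (y : ℂ) 2
  have e : Complex.exp (y : ℂ) - ∑ m ∈ Finset.range 2, (y : ℂ) ^ m / (m.factorial : ℂ)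
      = ((Real.exp y - (1 + y) : ℝ) : ℂ) := by
    simp [Finset.sum_range_succ]
  rw [e, Complex.norm_real, Complex.norm_real, Real.norm_eq_abs, Real.norm_eq_abs, sq_abs] at h
  linarith [le_abs_self (Real.exp y - (1 + y))]

/-- The square of a normalized signed sum is sub-exponential about its mean `1`: the quadratic
Taylor remainder of the exponential is absorbed by the square-exponential moment. -/
lemma sum_exp_mul_signSum_sq_le {d : ℕ} (v : Fin d → ℝ) (hv : ∑ j, v j ^ 2 = 1) (θ : ℝ)
    (hθ : |θ| ≤ 1 / 8) :
    ∑ τ, Real.exp (θ * signSum v τ ^ 2) ≤ 2 ^ d * Real.exp (θ + 256 * θ ^ 2) := by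
  have key : ∀ x : ℝ, Real.exp (θ * x ^ 2) ≤
      1 + θ * x ^ 2 + 128 * θ ^ 2 * Real.exp (x ^ 2 / 4) := by
    intro x
    have h1 := exp_le_one_add_add_sq_mul_exp_abs (θ * x ^ 2)
    have h2 : Real.exp |θ * x ^ 2| ≤ Real.exp (x ^ 2 / 8) := by
      rw [abs_mul, abs_of_nonneg (sq_nonneg x)]
      apply Real.exp_le_exp.2
      nlinarith [sq_nonneg x]
    have h3 : (x ^ 2) ^ 2 ≤ 128 * Real.exp (x ^ 2 / 8) := by
      have := Real.quadratic_le_exp_of_nonneg (x := x ^ 2 / 8) (by positivity)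
      nlinarith [sq_nonneg x]
    have h4 : Real.exp (x ^ 2 / 4) = Real.exp (x ^ 2 / 8) * Real.exp (x ^ 2 / 8) := by
      rw [← Real.exp_add]
      congr 1
      ring
    have h5 : (θ * x ^ 2) ^ 2 * Real.exp |θ * x ^ 2| ≤
        128 * θ ^ 2 * Real.exp (x ^ 2 / 4) := by
      calc (θ * x ^ 2) ^ 2 * Real.exp |θ * x ^ 2|
          = θ ^ 2 * ((x ^ 2) ^ 2 * Real.exp |θ * x ^ 2|) := by ring
        _ ≤ θ ^ 2 * ((128 * Real.exp (x ^ 2 / 8)) * Real.exp (x ^ 2 / 8)) := by gcongr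
        _ = _ := by rw [h4]; ring
    linarith
  calc ∑ τ, Real.exp (θ * signSum v τ ^ 2)
      ≤ ∑ τ, (1 + θ * signSum v τ ^ 2 + 128 * θ ^ 2 * Real.exp (signSum v τ ^ 2 / 4)) :=
        Finset.sum_le_sum fun τ _ => key _
    _ = 2 ^ d + θ * 2 ^ d +
        128 * θ ^ 2 * ∑ τ, Real.exp (signSum v τ ^ 2 / 4) := by
        rw [Finset.sum_add_distrib, Finset.sum_add_distrib, ← Finset.mul_sum, ← Finset.mul_sum,
          sum_signSum_sq, hv]
        simp
    _ ≤ 2 ^ d + θ * 2 ^ d + 128 * θ ^ 2 * (2 ^ d * 2) := by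
        gcongr
        exact sum_exp_signSum_sq_le v hv
    _ = 2 ^ d * (θ + 256 * θ ^ 2 + 1) := by ring
    _ ≤ _ := by
        gcongr
        exact Real.add_one_le_exp _

/-! ### Concentration of the squared length of a sign-matrix image -/

/-- One Chernoff bound covering both tails: `θ = η / 512` gives the upper tail of `∑ X i ^ 2`
and `θ = -η / 512` the lower one. -/
lemma card_chernoff {d k : ℕ} (v : Fin d → ℝ) (hv : ∑ j, v j ^ 2 = 1) (η θ : ℝ)
    (hη1 : η ≤ 1) (hθ : |θ| = η / 512) :
    ((Finset.univ.filter fun σ : Fin k → Fin d → Bool =>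
      η * |θ| * k < θ * (∑ i, signSum v (σ i) ^ 2 - k)).card : ℝ) ≤
      2 ^ (k * d) * Real.exp (-(η ^ 2 * k / 1024)) := by
  set A := Finset.univ.filter fun σ : Fin k → Fin d → Bool =>
      η * |θ| * k < θ * (∑ i, signSum v (σ i) ^ 2 - k)
  have h1 : (A.card : ℝ) * Real.exp (η * |θ| * k + θ * k) ≤
      ∑ σ : Fin k → Fin d → Bool, ∏ i, Real.exp (θ * signSum v (σ i) ^ 2) := by
    rw [← nsmul_eq_mul]
    refine (Finset.card_nsmul_le_sum A _ _ fun σ hσ => ?_).trans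
      (Finset.sum_le_sum_of_subset_of_nonneg (Finset.subset_univ A) fun σ _ _ =>
        Finset.prod_nonneg fun i _ => (Real.exp_pos _).le)
    rw [← Real.exp_sum, ← Finset.mul_sum]
    apply Real.exp_le_exp.2
    have := (Finset.mem_filter.1 hσ).2
    linarith
  rw [← Fintype.sum_pow (fun τ => Real.exp (θ * signSum v τ ^ 2))] at h1
  have h2 : (∑ τ, Real.exp (θ * signSum v τ ^ 2)) ^ k ≤
      (2 ^ d * Real.exp (θ + 256 * θ ^ 2)) ^ k :=
    pow_le_pow_left₀ (Finset.sum_nonneg fun τ _ => (Real.exp_pos _).le)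
      (sum_exp_mul_signSum_sq_le v hv θ (by rw [hθ]; linarith)) k
  have h3 : (2 ^ d * Real.exp (θ + 256 * θ ^ 2)) ^ k =
      2 ^ (k * d) * Real.exp (-(η ^ 2 * k / 1024)) * Real.exp (η * |θ| * k + θ * k) := by
    rw [mul_pow, ← pow_mul, mul_comm d k, ← Real.exp_nat_mul, mul_assoc, ← Real.exp_add,
      ← sq_abs θ, hθ]
    congr 2
    ring
  exact le_of_mul_le_mul_right (h1.trans (h2.trans h3.le)) (Real.exp_pos _)

lemma euclNorm_sq {n : ℕ} (v : Fin n → ℝ) : euclNorm v ^ 2 = ∑ i, v i ^ 2 :=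
  Real.sq_sqrt (Finset.sum_nonneg fun _ _ => sq_nonneg _)

lemma euclNorm_nonneg {n : ℕ} (v : Fin n → ℝ) : 0 ≤ euclNorm v := Real.sqrt_nonneg _

lemma signMatrix_mulVec {k d : ℕ} (σ : Fin k → Fin d → Bool) (w : Fin d → ℝ) (i : Fin k) :
    (signMatrix σ).mulVec w i = 1 / Real.sqrt k * signSum w (σ i) := by
  simp only [signMatrix, Matrix.mulVec, dotProduct, signSum, Matrix.of_apply, Finset.mul_sum]
  refine Finset.sum_congr rfl fun j _ => ?_
  split_ifs <;> ring

lemma euclNorm_sq_signMatrix {k d : ℕ} (σ : Fin k → Fin d → Bool) (w : Fin d → ℝ) :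
    euclNorm ((signMatrix σ).mulVec w) ^ 2 = (∑ i, signSum w (σ i) ^ 2) / k := by
  rw [euclNorm_sq, Finset.sum_div]
  refine Finset.sum_congr rfl fun i _ => ?_
  rw [signMatrix_mulVec, mul_pow, div_pow, Real.sq_sqrt (Nat.cast_nonneg k)]
  ring

lemma signSum_smul {d : ℕ} (c : ℝ) (v : Fin d → ℝ) (τ : Fin d → Bool) :
    signSum (c • v) τ = c * signSum v τ := by
  simp only [signSum, Finset.mul_sum]
  refine Finset.sum_congr rfl fun j _ => ?_
  split_ifs <;> simp

/-- A fixed vector is badly distorted by few sign matrices. -/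
lemma card_bad_le {d k : ℕ} (hk : 0 < k) (w : Fin d → ℝ) (η : ℝ) (hη : 0 < η) (hη1 : η ≤ 1) :
    ((Finset.univ.filter fun σ : Fin k → Fin d → Bool =>
      η * euclNorm w ^ 2 < |euclNorm ((signMatrix σ).mulVec w) ^ 2 - euclNorm w ^ 2|).card : ℝ) ≤
      2 * (2 ^ (k * d) * Real.exp (-(η ^ 2 * k / 1024))) := by
  have hk' : (0 : ℝ) < k := Nat.cast_pos.2 hk
  by_cases h0 : euclNorm w = 0
  · have hw : w = 0 := by
      have h := euclNorm_sq w
      rw [h0, zero_pow two_ne_zero, eq_comm,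
        Finset.sum_eq_zero_iff_of_nonneg fun _ _ => sq_nonneg _] at h
      funext j
      simpa using h j (Finset.mem_univ j)
    have h0' : euclNorm (0 : Fin d → ℝ) = 0 := hw ▸ h0
    have h0'' : euclNorm (0 : Fin k → ℝ) = 0 := by simp [euclNorm]
    rw [Finset.filter_false_of_mem]
    · simp only [Finset.card_empty, Nat.cast_zero]
      positivity
    · intro σ _
      simp [hw, h0', h0'']
  · set r := euclNorm w with hr
    have hrpos : 0 < r := lt_of_le_of_ne (euclNorm_nonneg w) (Ne.symm h0)
    set v := r⁻¹ • w with hv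
    have hwv : w = r • v := by rw [hv, smul_smul, mul_inv_cancel₀ h0, one_smul]
    have hv1 : ∑ j, v j ^ 2 = 1 := by
      simp only [hv, Pi.smul_apply, smul_eq_mul, mul_pow, ← Finset.mul_sum, ← euclNorm_sq, ← hr]
      field_simp
    have hp := card_chernoff (k := k) v hv1 η (η / 512) hη1 (abs_of_nonneg (by positivity))
    have hn := card_chernoff (k := k) v hv1 η (-(η / 512)) hη1
      (by rw [abs_neg, abs_of_nonneg (by positivity)])
    rw [abs_neg] at hn
    rw [abs_of_nonneg (by positivity : 0 ≤ η / 512)] at hp hn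
    rw [two_mul]
    refine le_trans ?_ (add_le_add hp hn)
    rw [← Nat.cast_add]
    refine Nat.cast_le.2 (le_trans (Finset.card_le_card fun σ hσ => ?_)
      (Finset.card_union_le _ _))
    have hσ' := (Finset.mem_filter.1 hσ).2
    simp only [Finset.mem_union, Finset.mem_filter, Finset.mem_univ, true_and]
    set Y := ∑ i, signSum v (σ i) ^ 2 with hY
    have e : euclNorm ((signMatrix σ).mulVec w) ^ 2 - r ^ 2 = r ^ 2 / k * (Y - k) := by
      rw [euclNorm_sq_signMatrix, hwv]
      simp only [signSum_smul, mul_pow, ← Finset.mul_sum, ← hY]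
      field_simp
    rw [e, abs_mul, abs_of_pos (by positivity)] at hσ'
    have h5 : η * k < |Y - k| := by
      have h6 : r ^ 2 / k * (η * k) < r ^ 2 / k * |Y - k| := by
        refine lt_of_eq_of_lt ?_ hσ'
        field_simp
      exact lt_of_mul_lt_mul_left h6 (by positivity)
    have h7 : 0 < η / 512 := by positivity
    rcases lt_abs.1 h5 with h | h
    · left
      nlinarith
    · right
      nlinarith

/-! ### Geometry of the map `Π` -/

lemma adagioMap_sub {s d k : ℕ} (P : Matrix (Fin s) (Fin d) ℝ) (S : Matrix (Fin k) (Fin d) ℝ)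
    (x y : Fin d → ℝ) : adagioMap P S x - adagioMap P S y = adagioMap P S (x - y) := by
  funext i
  refine Fin.addCases (fun i => ?_) (fun i => ?_) i
  · simp [adagioMap, Matrix.mulVec_sub]
  · simp only [adagioMap, Matrix.mulVec_sub, Pi.sub_apply, Fin.append_right]
    ring

lemma euclNorm_sq_adagioMap {s d k : ℕ} (P : Matrix (Fin s) (Fin d) ℝ)
    (S : Matrix (Fin k) (Fin d) ℝ) (z : Fin d → ℝ) :
    euclNorm (adagioMap P S z) ^ 2 = euclNorm (P.mulVec z) ^ 2 +
      euclNorm (S.mulVec (z - P.transpose.mulVec (P.mulVec z))) ^ 2 := by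
  simp [euclNorm_sq, Fin.sum_univ_add, adagioMap]

/-- Pythagoras for the orthogonal projection `Pᵀ P`. -/
lemma euclNorm_sq_residual {s d : ℕ} (P : Matrix (Fin s) (Fin d) ℝ)
    (hP : P * P.transpose = 1) (z : Fin d → ℝ) :
    euclNorm z ^ 2 = euclNorm (P.mulVec z) ^ 2 +
      euclNorm (z - P.transpose.mulVec (P.mulVec z)) ^ 2 := by
  have hd : ∀ {n : ℕ} (u : Fin n → ℝ), euclNorm u ^ 2 = u ⬝ᵥ u := fun u => by
    rw [euclNorm_sq]
    exact Finset.sum_congr rfl fun i _ => sq (u i)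
  have h1 : z ⬝ᵥ P.transpose.mulVec (P.mulVec z) = P.mulVec z ⬝ᵥ P.mulVec z := by
    rw [Matrix.dotProduct_mulVec, Matrix.vecMul_transpose]
  have h2 : P.transpose.mulVec (P.mulVec z) ⬝ᵥ P.transpose.mulVec (P.mulVec z) =
      P.mulVec z ⬝ᵥ P.mulVec z := by
    rw [Matrix.dotProduct_mulVec, Matrix.vecMul_transpose, Matrix.mulVec_mulVec, hP,
      Matrix.one_mulVec]
  simp only [hd, sub_dotProduct, dotProduct_sub]
  rw [h1, h2, dotProduct_comm (P.transpose.mulVec (P.mulVec z)) z, h1]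
  ring

/-- The deterministic step: distortion `δ` of `P` leaves a residual of squared length at most
`2 δ ‖z‖²`, so a relative error `ε / 2` on the residual costs only `δ ε ‖z‖²`. -/
lemma adagio_of_good {s d k : ℕ} (P : Matrix (Fin s) (Fin d) ℝ) (S : Matrix (Fin k) (Fin d) ℝ)
    (hP : P * P.transpose = 1) (δ ε : ℝ) (hδ : 0 ≤ δ) (hδ1 : δ ≤ 1) (hε : 0 < ε) (hε1 : ε < 1)
    (z : Fin d → ℝ) (hz : (1 - δ) * euclNorm z ≤ euclNorm (P.mulVec z))
    (hS : |euclNorm (S.mulVec (z - P.transpose.mulVec (P.mulVec z))) ^ 2 -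
      euclNorm (z - P.transpose.mulVec (P.mulVec z)) ^ 2| ≤
      ε / 2 * euclNorm (z - P.transpose.mulVec (P.mulVec z)) ^ 2) :
    (1 - δ * ε) * euclNorm z ≤ euclNorm (adagioMap P S z) ∧
      euclNorm (adagioMap P S z) ≤ (1 + δ * ε) * euclNorm z := by
  have hpy := euclNorm_sq_residual P hP z
  have hA := euclNorm_sq_adagioMap P S z
  have hzn := euclNorm_nonneg z
  have hPn := euclNorm_nonneg (P.mulVec z)
  have hAn := euclNorm_nonneg (adagioMap P S z)
  set r := euclNorm (z - P.transpose.mulVec (P.mulVec z))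
  set q := euclNorm (S.mulVec (z - P.transpose.mulVec (P.mulVec z)))
  set n := euclNorm z
  set p := euclNorm (P.mulVec z)
  set a := euclNorm (adagioMap P S z)
  obtain ⟨hS1, hS2⟩ := abs_le.1 hS
  have hp2 : ((1 - δ) * n) ^ 2 ≤ p ^ 2 :=
    pow_le_pow_left₀ (mul_nonneg (by linarith) hzn) hz 2
  have hr : r ^ 2 ≤ 2 * δ * n ^ 2 := by nlinarith [sq_nonneg (δ * n)]
  have hr' : ε / 2 * r ^ 2 ≤ δ * ε * n ^ 2 := by nlinarith
  have ht0 : 0 ≤ δ * ε := by positivity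
  have ht1 : δ * ε ≤ 1 := by nlinarith
  have hn2 : 0 ≤ n ^ 2 := sq_nonneg n
  constructor
  · refine (pow_le_pow_iff_left₀ (mul_nonneg (by linarith) hzn) hAn two_ne_zero).1 ?_
    nlinarith [mul_nonneg (mul_nonneg ht0 (sub_nonneg.2 ht1)) hn2]
  · refine (pow_le_pow_iff_left₀ hAn (mul_nonneg (by linarith) hzn) two_ne_zero).1 ?_
    nlinarith [mul_nonneg ht0 hn2, mul_nonneg (mul_nonneg ht0 ht0) hn2]

/-! ### Union bound over pairs of points -/

/-- **Main theorem (probabilistic ADAGIO form).**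
There is a universal constant `C > 0` such that: for every finite `T ⊆ ℝ^d` with
`|T| ≥ 2`, every `P ∈ ℝ^{s×d}` with orthonormal rows and distortion at most `δ` on `T`
(`0 ≤ δ ≤ 1`), every `0 < ε < 1` and every `k ≥ C · ε⁻² · log |T|`, if `S` is a `k × d`
matrix with i.i.d. uniform entries in `{−1/√k, +1/√k}`, then with probability at least
`0.99` the map `Π(w) = (P w, S(w − Pᵀ P w))` has distortion at most `δ·ε` on `T`. -/
theorem stmt_3 :
    ∃ C : ℝ, 0 < C ∧
      ∀ (d s k : ℕ) (T : Finset (Fin d → ℝ)) (P : Matrix (Fin s) (Fin d) ℝ) (δ ε : ℝ),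
        2 ≤ T.card → P * P.transpose = 1 → 0 ≤ δ → δ ≤ 1 →
        HasDistortionOn P δ T → 0 < ε → ε < 1 →
        C * ε⁻¹ ^ 2 * Real.log (T.card : ℝ) ≤ (k : ℝ) →
        (0.99 : ℝ) ≤
          (((Finset.univ.filter fun σ : Fin k → Fin d → Bool =>
              ∀ x ∈ T, ∀ y ∈ T, x ≠ y →
                (1 - δ * ε) * euclNorm (x - y) ≤
                    euclNorm (adagioMap P (signMatrix σ) x - adagioMap P (signMatrix σ) y) ∧
                  euclNorm (adagioMap P (signMatrix σ) x - adagioMap P (signMatrix σ) y) ≤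
                    (1 + δ * ε) * euclNorm (x - y)).card : ℝ) / 2 ^ (k * d)) := by
  refine ⟨40960, by norm_num, ?_⟩
  intro d s k T P δ ε hT hP hδ hδ1 hD hε hε1 hk
  have hT' : (2 : ℝ) ≤ T.card := by exact_mod_cast hT
  have hlog : 0 < Real.log (T.card : ℝ) := Real.log_pos (by linarith)
  have hkpos : 0 < k := by
    have : (0 : ℝ) < k := lt_of_lt_of_le (by positivity) hk
    exact_mod_cast this
  set good := Finset.univ.filter fun σ : Fin k → Fin d → Bool =>
    ∀ x ∈ T, ∀ y ∈ T, x ≠ y →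
      (1 - δ * ε) * euclNorm (x - y) ≤
          euclNorm (adagioMap P (signMatrix σ) x - adagioMap P (signMatrix σ) y) ∧
        euclNorm (adagioMap P (signMatrix σ) x - adagioMap P (signMatrix σ) y) ≤
          (1 + δ * ε) * euclNorm (x - y) with hgood
  let res : (Fin d → ℝ) × (Fin d → ℝ) → Fin d → ℝ := fun q =>
    (q.1 - q.2) - P.transpose.mulVec (P.mulVec (q.1 - q.2))
  let bad : (Fin d → ℝ) × (Fin d → ℝ) → Finset (Fin k → Fin d → Bool) := fun q =>
    Finset.univ.filter fun σ => ε / 2 * euclNorm (res q) ^ 2 <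
      |euclNorm ((signMatrix σ).mulVec (res q)) ^ 2 - euclNorm (res q) ^ 2|
  have hcover : (Finset.univ : Finset (Fin k → Fin d → Bool)) ⊆
      good ∪ (T ×ˢ T).biUnion bad := by
    intro σ _
    by_cases hσ : σ ∈ (T ×ˢ T).biUnion bad
    · exact Finset.mem_union_right _ hσ
    · refine Finset.mem_union_left _ (Finset.mem_filter.2 ⟨Finset.mem_univ _, ?_⟩)
      intro x hx y hy hxy
      rw [adagioMap_sub]
      refine adagio_of_good P _ hP δ ε hδ hδ1 hε hε1 _ (hD x hx y hy hxy).1 ?_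
      by_contra hcon
      exact hσ (Finset.mem_biUnion.2 ⟨(x, y), Finset.mk_mem_product hx hy,
        Finset.mem_filter.2 ⟨Finset.mem_univ _, not_le.1 hcon⟩⟩)
  -- With `log |T| ≤ ε² k / 40960`, each pair fails with probability at most `2 |T|⁻¹⁰`.
  have hexp : Real.exp (-((ε / 2) ^ 2 * k / 1024)) ≤ ((T.card : ℝ) ^ 10)⁻¹ := by
    have h1 : 40960 * Real.log (T.card : ℝ) ≤ ε ^ 2 * k := by
      have := mul_le_mul_of_nonneg_left hk (sq_nonneg ε)
      refine le_of_eq_of_le ?_ this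
      field_simp
    rw [← Real.exp_log (by positivity : (0 : ℝ) < ((T.card : ℝ) ^ 10)⁻¹), Real.log_inv,
      Real.log_pow]
    apply Real.exp_le_exp.2
    push_cast
    linarith
  have hbad : (((T ×ˢ T).biUnion bad).card : ℝ) ≤ 0.01 * 2 ^ (k * d) := by
    have h1 : (((T ×ˢ T).biUnion bad).card : ℝ) ≤ ∑ q ∈ T ×ˢ T, ((bad q).card : ℝ) := by
      exact_mod_cast Finset.card_biUnion_le
    have h2 : ∑ q ∈ T ×ˢ T, ((bad q).card : ℝ) ≤
        ∑ _q ∈ T ×ˢ T, 2 * (2 ^ (k * d) * ((T.card : ℝ) ^ 10)⁻¹) :=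
      Finset.sum_le_sum fun q _ =>
        (card_bad_le hkpos (res q) (ε / 2) (by positivity) (by linarith)).trans (by gcongr)
    rw [Finset.sum_const, Finset.card_product, nsmul_eq_mul] at h2
    push_cast at h2
    have h3 : (T.card : ℝ) * T.card * (2 * (2 ^ (k * d) * ((T.card : ℝ) ^ 10)⁻¹)) =
        2 * ((T.card : ℝ) ^ 8)⁻¹ * 2 ^ (k * d) := by
      field_simp
    have h4 : ((T.card : ℝ) ^ 8)⁻¹ ≤ (2 ^ 8)⁻¹ := by gcongr
    rw [h3] at h2
    refine h1.trans (h2.trans ?_)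
    gcongr
    norm_num at h4 ⊢
    linarith
  have hcard : (2 : ℝ) ^ (k * d) ≤ good.card + ((T ×ˢ T).biUnion bad).card := by
    have h1 := (Finset.card_le_card hcover).trans (Finset.card_union_le _ _)
    have h2 : (Finset.univ : Finset (Fin k → Fin d → Bool)).card = 2 ^ (k * d) := by
      simp [← pow_mul, mul_comm]
    rw [h2] at h1
    exact_mod_cast h1
  rw [le_div_iff₀ (by positivity)]
  linarith
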